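/- arXiv:0903.3688 — 5 statements merged into one kernel-verified Lean document; each statement's English description precedes it below -/
import Mathlib

section
/- The closed right half-plane H = {z ∈ ℂ : Re(z) ≥ 0} is a Rolle's domain. -/
/-- A set `R ⊆ ℂ` is a Rolle's domain if every nonconstant complex polynomial `P`
with `P(-1) = P(1)` has a critical point (a root of `P'`) lying in `R`. -/
def IsRollesDomain (R : Set ℂ) : Prop :=
  ∀ P : Polynomial ℂ, 0 < P.natDegree → P.eval (-1) = P.eval 1 →
    ∃ z ∈ R, P.derivative.eval z = 0

/-!
The functional `L Q = ∫ Q` over the segment from `a` to `b` sends `P'` to `P(b) - P(a)`. If all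
critical points of `P` were closer to `a` than to `b`, then by Grace's theorem the relation
`L P' = 0` would still hold with some `(X - ζ) ^ n` in place of `P'`, where `ζ` is again closer to
`a` than to `b`. But then `(b - ζ) ^ (n + 1) = (a - ζ) ^ (n + 1)`, so `ζ` is equidistant from `a`
and `b`. The critical points are merged one at a time by Laguerre's theorem on polar derivatives,
which holds because the inversion `y ↦ (ζ - y)⁻¹` maps the complementary half-plane to a convex set.
-/

open Polynomial
open scoped Pointwise

/-- Polar convexity with respect to the pole `ζ`: the image of `S ∪ {∞}` under the inversion
`y ↦ (ζ - y)⁻¹` is convex. The point `∞` is encoded by its image `0`. -/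
def IsPolarConvex (ζ : ℂ) (S : Set ℂ) : Prop :=
  Convex ℝ {w : ℂ | w = 0 ∨ ζ - w⁻¹ ∈ S}

lemma norm_sub_one_sq (u : ℂ) : ‖u - 1‖ ^ 2 = ‖u‖ ^ 2 - 2 * u.re + 1 := by
  rw [Complex.sq_norm, Complex.sq_norm, Complex.normSq_sub]
  simp only [map_one, mul_one]
  ring

lemma convex_setOf_norm_mul_sub_one_le {p q : ℂ} (hpq : ‖p‖ ≤ ‖q‖) :
    Convex ℝ {w : ℂ | ‖q * w - 1‖ ≤ ‖p * w - 1‖} := by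
  have hc : 0 ≤ ‖q‖ ^ 2 - ‖p‖ ^ 2 := sub_nonneg.mpr (by gcongr)
  have hconv : ConvexOn ℝ Set.univ
      fun w : ℂ ↦ (‖q‖ ^ 2 - ‖p‖ ^ 2) * ‖w‖ ^ 2 + 2 * ((p - q) * w).re :=
    ((convexOn_univ_norm.pow (fun _ _ ↦ norm_nonneg _) 2).smul hc).add
      (((Complex.reLm ∘ₗ LinearMap.mulLeft ℝ (p - q)).convexOn convex_univ).smul zero_le_two)
  convert hconv.convex_le 0 using 1
  ext w
  simp only [Set.mem_ofPred_eq, Set.mem_univ, true_and]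
  rw [← sq_le_sq₀ (norm_nonneg _) (norm_nonneg _), norm_sub_one_sq, norm_sub_one_sq,
    norm_mul, norm_mul, mul_pow, mul_pow, sub_mul p, Complex.sub_re]
  constructor <;> intro h <;> linarith

lemma isPolarConvex_setOf_dist_le {a b ζ : ℂ} (h : dist ζ a ≤ dist ζ b) :
    IsPolarConvex ζ {z | dist z b ≤ dist z a} := by
  rw [dist_eq_norm, dist_eq_norm] at h
  rw [IsPolarConvex]
  convert convex_setOf_norm_mul_sub_one_le h using 1
  ext w
  by_cases hw : w = 0
  · simp [hw]
  have hdist (c : ℂ) : ‖(ζ - c) * w - 1‖ = dist (ζ - w⁻¹) c * ‖w‖ := by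
    rw [dist_eq_norm, ← norm_mul, sub_right_comm, sub_mul _ w⁻¹, inv_mul_cancel₀ hw]
  simp [hw, hdist]

lemma multiset_sum_mem_smul_of_convex {𝕜 E : Type*} [Field 𝕜] [LinearOrder 𝕜]
    [IsStrictOrderedRing 𝕜] [AddCommGroup E] [Module 𝕜 E] {K : Set E} (hK : Convex 𝕜 K)
    (h0 : (0 : E) ∈ K) {n : ℕ} {s : Multiset E} (hs : ∀ v ∈ s, v ∈ K) (hn : s.card ≤ n) :
    s.sum ∈ (n : 𝕜) • K := by
  induction s using Multiset.induction_on generalizing n with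
  | empty => exact ⟨0, h0, by simp⟩
  | cons v s ih =>
    obtain _ | n := n
    · simp at hn
    have hsum : s.sum ∈ (n : 𝕜) • K :=
      ih (fun w hw ↦ hs w (Multiset.mem_cons_of_mem hw)) (by simpa using hn)
    rw [Multiset.sum_cons, add_comm v, Nat.cast_succ, hK.add_smul n.cast_nonneg zero_le_one,
      one_smul]
    exact Set.add_mem_add hsum (hs v (Multiset.mem_cons_self v s))

/-- The polar derivative of `G` with respect to the pole `z`, where `G` is regarded as a polynomial
of formal degree `n`. -/
noncomputable def polarDerivative {R : Type*} [CommRing R] (n : ℕ) (z : R) (G : R[X]) : R[X] :=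
  (n : R[X]) * G + (C z - X) * derivative G

/-- **Laguerre's theorem**. -/
theorem eval_polarDerivative_ne_zero {S : Set ℂ} {n : ℕ} (hn : n ≠ 0) {G : ℂ[X]}
    (hdeg : G.natDegree ≤ n) (hroots : ∀ y, G.IsRoot y → y ∈ S) {z ζ : ℂ} (hz : z ∉ S)
    (hζ : ζ ∉ S) (hS : IsPolarConvex ζ S) : (polarDerivative n z G).eval ζ ≠ 0 := by
  intro h
  have hn' : (n : ℂ) ≠ 0 := Nat.cast_ne_zero.mpr hn
  have hGζ : G.eval ζ ≠ 0 := fun h0 ↦ hζ (hroots ζ h0)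
  simp only [polarDerivative, eval_add, eval_mul, eval_natCast, eval_sub, eval_C, eval_X] at h
  have hne : ζ - z ≠ 0 := by
    intro h0
    rw [← neg_sub, h0] at h
    simp [hn', hGζ] at h
  set s : Multiset ℂ := G.roots.map fun y ↦ 1 / (ζ - y)
  have hsum : s.sum = (n : ℝ) • (ζ - z)⁻¹ := by
    rw [← (IsAlgClosed.splits G).eval_derivative_div_eval_of_ne_zero hGζ, Complex.real_smul,
      Complex.ofReal_natCast]
    field_simp
    linear_combination -h
  have hmem : s.sum ∈ (n : ℝ) • {w : ℂ | w = 0 ∨ ζ - w⁻¹ ∈ S} := by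
    refine multiset_sum_mem_smul_of_convex hS (Or.inl rfl) ?_
      ((Multiset.card_map _ _).trans_le (G.card_roots'.trans hdeg))
    simp only [s, Multiset.forall_mem_map_iff]
    intro y hy
    right
    simpa using hroots y (isRoot_of_mem_roots hy)
  rw [hsum, Set.smul_mem_smul_set_iff₀ (Nat.cast_ne_zero.mpr hn)] at hmem
  simp [hne, hz] at hmem

section Appell

variable {R : Type*} [CommRing R]

/-- The Appell polynomial `ζ ↦ L ((X - ζ) ^ n)` of a linear functional `L`, given by its binomial
expansion. -/
noncomputable def appellPolynomial (L : R[X] →ₗ[R] R) (n : ℕ) : R[X] :=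
  ∑ k ∈ Finset.range (n + 1), monomial k ((-1) ^ k * n.choose k * L (X ^ (n - k)))

lemma natDegree_appellPolynomial_le (L : R[X] →ₗ[R] R) (n : ℕ) :
    (appellPolynomial L n).natDegree ≤ n :=
  natDegree_sum_le_of_forall_le _ _ fun _ hk ↦
    (natDegree_monomial_le _).trans (Finset.mem_range_succ_iff.mp hk)

lemma eval_appellPolynomial (L : R[X] →ₗ[R] R) (n : ℕ) (ζ : R) :
    (appellPolynomial L n).eval ζ = L ((X - C ζ) ^ n) := by
  rw [sub_eq_neg_add, add_pow, map_sum, appellPolynomial, eval_finsetSum]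
  refine Finset.sum_congr rfl fun k _ ↦ ?_
  have hterm : (-C ζ) ^ k * X ^ (n - k) * (n.choose k : R[X])
      = ((-1) ^ k * n.choose k * ζ ^ k) • X ^ (n - k) := by
    rw [smul_eq_C_mul, neg_pow]
    simp only [map_mul, map_pow, map_neg, map_one, map_natCast]
    ring
  rw [hterm, map_smul, eval_monomial, smul_eq_mul]
  ring

lemma coeff_appellPolynomial (L : R[X] →ₗ[R] R) (n k : ℕ) :
    (appellPolynomial L n).coeff k = (-1) ^ k * n.choose k * L (X ^ (n - k)) := by
  simp only [appellPolynomial, finsetSum_coeff, coeff_monomial, Finset.sum_ite_eq',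
    Finset.mem_range_succ_iff, ite_eq_left_iff, not_le]
  intro hk
  simp [Nat.choose_eq_zero_of_lt hk]

lemma derivative_appellPolynomial_succ (L : R[X] →ₗ[R] R) (n : ℕ) :
    derivative (appellPolynomial L (n + 1)) = -((n + 1 : R) • appellPolynomial L n) := by
  ext k
  have hchoose : ((n : R) + 1) * n.choose k = (n + 1).choose (k + 1) * (k + 1) := by
    exact_mod_cast congrArg (Nat.cast (R := R)) (Nat.add_one_mul_choose_eq n k)
  rw [coeff_derivative, coeff_neg, coeff_smul, coeff_appellPolynomial, coeff_appellPolynomial,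
    Nat.add_sub_add_right, smul_eq_mul]
  linear_combination (-1) ^ k * L (X ^ (n - k)) * hchoose

lemma eval_polarDerivative_appellPolynomial_succ (L : R[X] →ₗ[R] R) (n : ℕ) (z ζ : R) :
    (polarDerivative (n + 1) z (appellPolynomial L (n + 1))).eval ζ
      = (n + 1) * L ((X - C z) * (X - C ζ) ^ n) := by
  have hsplit : (X - C z) * (X - C ζ) ^ n = (X - C ζ) ^ (n + 1) + (ζ - z) • (X - C ζ) ^ n := by
    rw [smul_eq_C_mul, C_sub]
    ring
  rw [hsplit, map_add, map_smul, polarDerivative, derivative_appellPolynomial_succ]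
  simp only [Nat.cast_add, Nat.cast_one, eval_add, eval_mul, eval_natCast, eval_one,
    eval_appellPolynomial, eval_sub, eval_C, eval_X, eval_neg, eval_smul, smul_eq_mul]
  ring

end Appell

section Grace

variable {S : Set ℂ}

/-- **Grace's theorem**, in the form of Walsh's coincidence theorem. -/
theorem map_prod_X_sub_C_ne_zero (hS : ∀ ζ ∉ S, IsPolarConvex ζ S) (hne : Sᶜ.Nonempty)
    (L : ℂ[X] →ₗ[ℂ] ℂ) {s : Multiset ℂ} (hs : ∀ z ∈ s, z ∉ S)
    (hL : ∀ ζ ∉ S, L ((X - C ζ) ^ s.card) ≠ 0) : L (s.map fun z ↦ X - C z).prod ≠ 0 := by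
  induction s using Multiset.induction_on generalizing L with
  | empty =>
    obtain ⟨ζ, hζ⟩ := hne
    simpa using hL ζ hζ
  | cons z s ih =>
    rw [Multiset.card_cons] at hL
    have hroots (y : ℂ) (hy : (appellPolynomial L (s.card + 1)).IsRoot y) : y ∈ S := by
      by_contra hyS
      exact hL y hyS ((eval_appellPolynomial L _ y).symm.trans hy)
    have hLz (ζ : ℂ) (hζ : ζ ∉ S) : L ((X - C z) * (X - C ζ) ^ s.card) ≠ 0 := by
      have hlaguerre := eval_polarDerivative_ne_zero s.card.succ_ne_zero
        (natDegree_appellPolynomial_le L _) hroots (hs z (Multiset.mem_cons_self z s)) hζ (hS ζ hζ)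
      rw [eval_polarDerivative_appellPolynomial_succ] at hlaguerre
      exact right_ne_zero_of_mul hlaguerre
    rw [Multiset.map_cons, Multiset.prod_cons]
    exact ih (L ∘ₗ LinearMap.mulLeft ℂ (X - C z))
      (fun w hw ↦ hs w (Multiset.mem_cons_of_mem hw)) hLz

theorem map_ne_zero_of_roots_notMem (hS : ∀ ζ ∉ S, IsPolarConvex ζ S) (hne : Sᶜ.Nonempty)
    (L : ℂ[X] →ₗ[ℂ] ℂ) {Q : ℂ[X]} (hQ : Q ≠ 0) (hroots : ∀ z ∈ Q.roots, z ∉ S)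
    (hL : ∀ ζ ∉ S, L ((X - C ζ) ^ Q.natDegree) ≠ 0) : L Q ≠ 0 := by
  rw [(IsAlgClosed.splits Q).natDegree_eq_card_roots] at hL
  rw [(IsAlgClosed.splits Q).eq_prod_roots, ← smul_eq_C_mul, map_smul]
  exact smul_ne_zero (leadingCoeff_ne_zero.mpr hQ)
    (map_prod_X_sub_C_ne_zero hS hne L hroots hL)

end Grace

lemma basisMonomials_eq_X_pow {R : Type*} [Semiring R] (n : ℕ) : basisMonomials R n = X ^ n := by
  rw [coe_basisMonomials, X_pow_eq_monomial]

section DefiniteIntegral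

variable {K : Type*} [Field K]

/-- The formal integral from `a` to `b`, as a linear functional on polynomials; it is meaningful in
characteristic zero, where no denominator `n + 1` vanishes. -/
noncomputable def definiteIntegral (a b : K) : K[X] →ₗ[K] K :=
  (basisMonomials K).constr K fun n ↦ (b ^ (n + 1) - a ^ (n + 1)) / (n + 1)

lemma definiteIntegral_X_pow (a b : K) (n : ℕ) :
    definiteIntegral a b (X ^ n) = (b ^ (n + 1) - a ^ (n + 1)) / (n + 1) := by
  rw [← basisMonomials_eq_X_pow, definiteIntegral, Module.Basis.constr_basis]

lemma definiteIntegral_derivative [CharZero K] (a b : K) (P : K[X]) :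
    definiteIntegral a b (derivative P) = P.eval b - P.eval a := by
  suffices h : definiteIntegral a b ∘ₗ derivative = leval b - leval a from LinearMap.congr_fun h P
  refine (basisMonomials K).ext fun n ↦ ?_
  rw [basisMonomials_eq_X_pow]
  obtain _ | n := n
  · simp [leval_apply]
  have hn : (n : K) + 1 ≠ 0 := Nat.cast_add_one_ne_zero n
  rw [LinearMap.comp_apply, derivative_X_pow_succ, ← smul_eq_C_mul, map_smul,
    definiteIntegral_X_pow, smul_eq_mul, mul_div_cancel₀ _ hn]
  simp [leval_apply]

lemma definiteIntegral_X_sub_C_pow_ne_zero {𝕜 : Type*} [NormedField 𝕜] [CharZero 𝕜] {a b ζ : 𝕜}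
    (h : dist ζ a ≠ dist ζ b) (n : ℕ) : definiteIntegral a b ((X - C ζ) ^ n) ≠ 0 := by
  intro h0
  have heval := definiteIntegral_derivative a b ((X - C ζ) ^ (n + 1))
  rw [derivative_X_sub_C_pow, ← smul_eq_C_mul, map_smul, Nat.add_sub_cancel, h0, smul_zero] at heval
  simp only [eval_pow, eval_sub, eval_X, eval_C] at heval
  have hnorm : ‖a - ζ‖ ^ (n + 1) = ‖b - ζ‖ ^ (n + 1) := by
    rw [← norm_pow, ← norm_pow, sub_eq_zero.mp heval.symm]
  rw [dist_comm, dist_comm ζ, dist_eq_norm, dist_eq_norm] at h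
  exact h ((pow_left_inj₀ (norm_nonneg _) (norm_nonneg _) n.succ_ne_zero).mp hnorm)

end DefiniteIntegral

theorem exists_eval_derivative_eq_zero_dist_le {a b : ℂ} (hab : a ≠ b) {P : ℂ[X]}
    (hP : P.eval a = P.eval b) : ∃ z, dist z b ≤ dist z a ∧ P.derivative.eval z = 0 := by
  by_contra! hcrit
  have hP' : derivative P ≠ 0 := fun h ↦ hcrit b (by simp) (by simp [h])
  refine map_ne_zero_of_roots_notMem (S := {z | dist z b ≤ dist z a})
    (fun ζ hζ ↦ isPolarConvex_setOf_dist_le (not_le.mp hζ).le) ⟨a, by simp [hab]⟩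
    (definiteIntegral a b) hP' (fun z hz hzS ↦ hcrit z hzS (isRoot_of_mem_roots hz))
    (fun ζ hζ ↦ definiteIntegral_X_sub_C_pow_ne_zero (not_le.mp hζ).ne _) ?_
  rw [definiteIntegral_derivative, hP, sub_self]

lemma dist_one_le_dist_neg_one_iff {z : ℂ} : dist z 1 ≤ dist z (-1) ↔ 0 ≤ z.re := by
  rw [Complex.dist_eq_re_im, Complex.dist_eq_re_im, Real.sqrt_le_sqrt_iff (by positivity)]
  simp only [Complex.one_re, Complex.one_im, Complex.neg_re, Complex.neg_im]
  constructor <;> intro h <;> linarith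

theorem right_half_plane_is_rolles_domain :
    IsRollesDomain {z : ℂ | 0 ≤ z.re} := by
  intro P _ hP
  obtain ⟨z, hdist, hz⟩ := exists_eval_derivative_eq_zero_dist_le (by norm_num) hP
  exact ⟨z, dist_one_le_dist_neg_one_iff.mp hdist, hz⟩
end

section
/- If S is a subset of the closed right half-plane H = {z ∈ ℂ : Re(z) ≥ 0} and S is a Rolle's domain, then S contains the set {z ∈ ℂ : Re(z) > 0} ∪ I, where I = {i·cot(kπ/n) : n ≥ 2 and 1 ≤ k < n, with n, k integers}. -/
/-!
Among the polynomials whose derivative is a multiple of `(z - w) ^ (n - 1) * (z - v)`, the values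
at `-1` and `1` agree for a suitable `v`, and then a Rolle's domain contains `w` or `v`.
If `w` has positive real part, `-1` is farther from `w` than `1` is, so the values at `-1` dominate
and force `v → -1` as `n → ∞`. A Rolle's domain that stays away from `-1` must therefore contain
`w`. For `w = i cot (kπ / n)`, the ratio of `1 - w` and `-1 - w` is an `n`-th root of unity, so
already `(z - w) ^ n` has equal values at `±1`, and its only critical point is `w`.
-/

open Polynomial Filter Topology

section TwoCriticalPoints

/-- A polynomial with critical points `w`, of multiplicity `n - 1`, and `v`: the multiple by
`n * (n + 1)`, which avoids division, of a primitive of `(X - w) ^ (n - 1) * (X - v)`. -/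
noncomputable def twoCriticalPointPoly {R : Type*} [CommRing R] (w v : R) (n : ℕ) : R[X] :=
  C (n : R) * (X - C w) ^ (n + 1) - C ((n + 1) * (v - w)) * (X - C w) ^ n

theorem eval_twoCriticalPointPoly {R : Type*} [CommRing R] (w v : R) (n : ℕ) (z : R) :
    (twoCriticalPointPoly w v n).eval z =
      n * (z - w) ^ (n + 1) - (n + 1) * (v - w) * (z - w) ^ n := by
  simp [twoCriticalPointPoly]

theorem derivative_twoCriticalPointPoly {R : Type*} [CommRing R] (w v : R) (n : ℕ) :
    derivative (twoCriticalPointPoly w v n) =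
      C (n * (n + 1) : R) * ((X - C w) ^ (n - 1) * (X - C v)) := by
  cases n with
  | zero => simp [twoCriticalPointPoly]
  | succ m =>
    rw [twoCriticalPointPoly, derivative_sub, derivative_C_mul, derivative_C_mul,
      derivative_X_sub_C_pow, derivative_X_sub_C_pow]
    simp only [Nat.add_sub_cancel, map_mul, map_add, map_sub, map_one, Nat.cast_add, Nat.cast_one]
    ring

variable {R : Type*} [CommRing R] [IsDomain R] [CharZero R] {w v : R} {n : ℕ}

theorem natDegree_twoCriticalPointPoly_pos (hn : n ≠ 0) :
    0 < (twoCriticalPointPoly w v n).natDegree := by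
  refine Nat.pos_of_ne_zero fun hdeg => ?_
  have hderiv := derivative_of_natDegree_zero hdeg
  rw [derivative_twoCriticalPointPoly] at hderiv
  refine mul_ne_zero (C_ne_zero.mpr ?_)
    (mul_ne_zero (pow_ne_zero _ (X_sub_C_ne_zero w)) (X_sub_C_ne_zero v)) hderiv
  exact mul_ne_zero (Nat.cast_ne_zero.mpr hn) (Nat.cast_add_one_ne_zero n)

theorem eq_or_eq_of_eval_derivative_twoCriticalPointPoly_eq_zero (hn : n ≠ 0) {z : R}
    (hz : (derivative (twoCriticalPointPoly w v n)).eval z = 0) : z = w ∨ z = v := by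
  have hscale : (n * (n + 1) : R) ≠ 0 :=
    mul_ne_zero (Nat.cast_ne_zero.mpr hn) (Nat.cast_add_one_ne_zero n)
  simp only [derivative_twoCriticalPointPoly, eval_mul, eval_C, eval_pow, eval_sub, eval_X,
    mul_eq_zero, hscale, false_or] at hz
  exact hz.imp (fun h => sub_eq_zero.mp (eq_zero_of_pow_eq_zero h)) sub_eq_zero.mp

end TwoCriticalPoints

section BalancingPoint

/-- The point `v` for which the polynomial with critical points `w`, of multiplicity `n - 1`, and
`v` has equal values at `-1` and `1`. It is meaningful only if `(1 - w) ^ n ≠ (-1 - w) ^ n`. -/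
def balancingPoint {K : Type*} [Field K] (w : K) (n : ℕ) : K :=
  w + n / (n + 1) * (((1 - w) ^ (n + 1) - (-1 - w) ^ (n + 1)) / ((1 - w) ^ n - (-1 - w) ^ n))

theorem eval_neg_one_twoCriticalPointPoly_balancingPoint {K : Type*} [Field K] [CharZero K] {w : K}
    {n : ℕ} (h : (1 - w) ^ n ≠ (-1 - w) ^ n) :
    (twoCriticalPointPoly w (balancingPoint w n) n).eval (-1) =
      (twoCriticalPointPoly w (balancingPoint w n) n).eval 1 := by
  have hdiff : (1 - w) ^ n - (-1 - w) ^ n ≠ 0 := sub_ne_zero.mpr h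
  have hsucc : (n + 1 : K) ≠ 0 := Nat.cast_add_one_ne_zero n
  have hv : (n + 1) * (balancingPoint w n - w) * ((1 - w) ^ n - (-1 - w) ^ n) =
      n * ((1 - w) ^ (n + 1) - (-1 - w) ^ (n + 1)) := by
    rw [balancingPoint]
    field_simp
    ring
  rw [eval_twoCriticalPointPoly, eval_twoCriticalPointPoly]
  linear_combination hv

theorem tendsto_pow_succ_sub_div_pow_sub {𝕜 : Type*} [NormedField 𝕜] {a b : 𝕜} (h : ‖a‖ < ‖b‖) :
    Tendsto (fun n : ℕ => (a ^ (n + 1) - b ^ (n + 1)) / (a ^ n - b ^ n)) atTop (𝓝 b) := by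
  have hb : b ≠ 0 := norm_pos_iff.mp ((norm_nonneg a).trans_lt h)
  have hratio : Tendsto (fun n : ℕ => (a / b) ^ n) atTop (𝓝 0) :=
    tendsto_pow_atTop_nhds_zero_of_norm_lt_one <| by
      rwa [norm_div, div_lt_one (norm_pos_iff.mpr hb)]
  have hlim : Tendsto (fun n : ℕ => (a * (a / b) ^ n - b) / ((a / b) ^ n - 1)) atTop
      (𝓝 ((a * 0 - b) / (0 - 1))) :=
    ((hratio.const_mul a).sub_const b).div (hratio.sub_const 1) (by simp)
  have hb_eq : (a * 0 - b) / (0 - 1) = b := by simp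
  rw [hb_eq] at hlim
  refine hlim.congr fun n => ?_
  have hpow : (a / b) ^ n * b ^ n = a ^ n := by rw [← mul_pow, div_mul_cancel₀ a hb]
  rw [← mul_div_mul_right _ _ (pow_ne_zero n hb)]
  congr 1
  · linear_combination a * hpow
  · linear_combination hpow

theorem tendsto_balancingPoint {𝕜 : Type*} [RCLike 𝕜] {w : 𝕜} (h : ‖1 - w‖ < ‖-1 - w‖) :
    Tendsto (balancingPoint w) atTop (𝓝 (-1)) := by
  have hfrac : Tendsto (fun n : ℕ => (n / (n + 1) : 𝕜)) atTop (𝓝 1) :=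
    tendsto_natCast_div_add_atTop 1
  have hlim := (hfrac.mul (tendsto_pow_succ_sub_div_pow_sub h)).const_add w
  rwa [one_mul, add_sub_cancel] at hlim

end BalancingPoint

theorem norm_one_sub_lt_norm_neg_one_sub {w : ℂ} (hw : 0 < w.re) : ‖1 - w‖ < ‖-1 - w‖ := by
  refine lt_of_pow_lt_pow_left₀ 2 (norm_nonneg _) ?_
  simp only [Complex.sq_norm, Complex.normSq_apply, Complex.sub_re, Complex.sub_im, Complex.one_re,
    Complex.one_im, Complex.neg_re, Complex.neg_im]
  linarith

theorem one_sub_I_mul_cot {t : ℂ} (ht : Complex.sin t ≠ 0) :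
    1 - Complex.I * Complex.cot t =
      Complex.exp (2 * (t * Complex.I)) * (-1 - Complex.I * Complex.cot t) := by
  have hpos : 1 - Complex.I * Complex.cot t =
      -(Complex.I / Complex.sin t) * Complex.exp (t * Complex.I) := by
    rw [Complex.exp_mul_I, Complex.cot_eq_cos_div_sin]
    field_simp
    linear_combination Complex.sin t * Complex.I_sq
  have hneg : -1 - Complex.I * Complex.cot t =
      -(Complex.I / Complex.sin t) * Complex.exp (-t * Complex.I) := by
    rw [Complex.exp_mul_I, Complex.cot_eq_cos_div_sin, Complex.cos_neg, Complex.sin_neg]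
    field_simp
    linear_combination -Complex.sin t * Complex.I_sq
  rw [hpos, hneg, mul_left_comm, ← Complex.exp_add]
  ring_nf

theorem one_sub_I_mul_cot_pow {n k : ℕ} (hk : 0 < k) (hkn : k < n) :
    (1 - Complex.I * Real.cot (k * Real.pi / n)) ^ n =
      (-1 - Complex.I * Real.cot (k * Real.pi / n)) ^ n := by
  have hn : (0 : ℝ) < n := by exact_mod_cast hk.trans hkn
  set t : ℝ := k * Real.pi / n with ht
  have hsin : Complex.sin t ≠ 0 := by
    rw [← Complex.ofReal_sin, Complex.ofReal_ne_zero]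
    refine (Real.sin_pos_of_pos_of_lt_pi (by positivity) ?_).ne'
    rw [ht, div_lt_iff₀ hn, mul_comm]
    gcongr
  have hroot : Complex.exp (2 * (t * Complex.I)) ^ n = 1 := by
    have hangle : n * (2 * (t * Complex.I)) = k * (2 * Real.pi * Complex.I) := by
      have hn' : (n : ℂ) ≠ 0 := by exact_mod_cast hn.ne'
      rw [ht]
      push_cast
      field_simp
    rw [← Complex.exp_nat_mul, hangle, Complex.exp_nat_mul_two_pi_mul_I]
  rw [Complex.ofReal_cot, one_sub_I_mul_cot hsin, mul_pow, hroot, one_mul]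

namespace IsRollesDomain

variable {S : Set ℂ} {w v : ℂ} {n : ℕ}

theorem mem_or_mem (hR : IsRollesDomain S) (hn : n ≠ 0)
    (h : (twoCriticalPointPoly w v n).eval (-1) = (twoCriticalPointPoly w v n).eval 1) :
    w ∈ S ∨ v ∈ S := by
  obtain ⟨z, hzS, hz⟩ := hR _ (natDegree_twoCriticalPointPoly_pos hn) h
  rcases eq_or_eq_of_eval_derivative_twoCriticalPointPoly_eq_zero hn hz with rfl | rfl
  exacts [Or.inl hzS, Or.inr hzS]

theorem mem_of_pow_eq_pow (hR : IsRollesDomain S) (hn : 2 ≤ n)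
    (h : (1 - w) ^ n = (-1 - w) ^ n) : w ∈ S := by
  obtain ⟨m, rfl⟩ : ∃ m, n = m + 1 := Nat.exists_eq_add_of_le' (by lia)
  refine or_self_iff.mp (hR.mem_or_mem (v := w) (n := m) (by lia) ?_)
  rw [eval_twoCriticalPointPoly, eval_twoCriticalPointPoly, h]
  simp

theorem mem_of_norm_lt (hR : IsRollesDomain S) (hS : -1 ∉ closure S)
    (hw : ‖1 - w‖ < ‖-1 - w‖) : w ∈ S := by
  have hfar : ∀ᶠ n in atTop, balancingPoint w n ∉ S :=
    ((tendsto_balancingPoint hw).eventually_mem (isClosed_closure.isOpen_compl.mem_nhds hS)).mono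
      fun _ hn hmem => hn (subset_closure hmem)
  obtain ⟨n, hvS, hn⟩ := (hfar.and (eventually_ne_atTop 0)).exists
  have hpow : (1 - w) ^ n ≠ (-1 - w) ^ n := fun heq =>
    (pow_lt_pow_left₀ hw (norm_nonneg _) hn).ne <| by rw [← norm_pow, heq, norm_pow]
  exact (hR.mem_or_mem hn (eval_neg_one_twoCriticalPointPoly_balancingPoint hpow)).resolve_right hvS

end IsRollesDomain

theorem rolles_subset_of_half_plane_contains_general
    (S : Set ℂ) (hS : -1 ∉ closure S) (hR : IsRollesDomain S) :
    {z : ℂ | 0 < z.re} ∪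
      {z : ℂ | ∃ n k : ℕ, 2 ≤ n ∧ 1 ≤ k ∧ k < n ∧
        z = Complex.I * (Real.cot (k * Real.pi / n) : ℂ)} ⊆ S := by
  rintro z (hz | ⟨n, k, hn, hk, hkn, rfl⟩)
  · exact hR.mem_of_norm_lt hS (norm_one_sub_lt_norm_neg_one_sub hz)
  · exact hR.mem_of_pow_eq_pow hn (one_sub_I_mul_cot_pow hk hkn)

theorem rolles_subset_of_half_plane_contains
    (S : Set ℂ) (hS : S ⊆ {z : ℂ | 0 ≤ z.re}) (hR : IsRollesDomain S) :
    {z : ℂ | 0 < z.re} ∪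
      {z : ℂ | ∃ n k : ℕ, 2 ≤ n ∧ 1 ≤ k ∧ k < n ∧
        z = Complex.I * (Real.cot (k * Real.pi / n) : ℂ)} ⊆ S := by
  have hclosed : IsClosed {z : ℂ | 0 ≤ z.re} := isClosed_le continuous_const Complex.continuous_re
  refine rolles_subset_of_half_plane_contains_general S (fun hmem => ?_) hR
  exact absurd (closure_minimal hS hclosed hmem) (by norm_num)
end

section
/- If S ⊆ ℂ is a Rolle's domain, then for every ζ ∈ ℂ with Re(ζ) > 0, S contains ζ or S contains -1/(3ζ). -/
/-! A cubic with critical points `ζ` and `η` is an affine image of an antiderivative of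
`(z - ζ) * (z - η)`, whose integral over `[-1, 1]` is `2 / 3 + 2 * ζ * η`. Hence it takes equal
values at `-1` and `1` exactly when `3 * ζ * η = -1`, and then a Rolle's domain must contain one
of its two critical points. -/

section CriticalCubic

open Polynomial

variable {R : Type*} [CommRing R]

/-- The cubic polynomial with critical points `ζ` and `η`, normalized to be the antiderivative of
`6 * (X - ζ) * (X - η)` that vanishes at `0`; the factor `6` clears all denominators, so that the
cubic makes sense over every commutative ring. -/
noncomputable def criticalCubic (ζ η : R) : R[X] :=
  C 2 * X ^ 3 - C (3 * (ζ + η)) * X ^ 2 + C (6 * (ζ * η)) * X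

theorem natDegree_criticalCubic (h2 : (2 : R) ≠ 0) (ζ η : R) :
    (criticalCubic ζ η).natDegree = 3 := by
  unfold criticalCubic
  compute_degree!

theorem derivative_criticalCubic (ζ η : R) :
    derivative (criticalCubic ζ η) = 6 * ((X - C ζ) * (X - C η)) := by
  simp only [criticalCubic, derivative_add, derivative_sub, derivative_C_mul, derivative_X_pow,
    derivative_X]
  simp only [map_mul, map_add, map_ofNat, map_natCast]
  push_cast
  ring

theorem eval_one_sub_eval_neg_one_criticalCubic (ζ η : R) :
    (criticalCubic ζ η).eval 1 - (criticalCubic ζ η).eval (-1) = 4 * (1 + 3 * (ζ * η)) := by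
  simp only [criticalCubic, eval_add, eval_sub, eval_mul, eval_C, eval_pow, eval_X]
  ring

end CriticalCubic

theorem IsRollesDomain.mem_or_mem_s3 {S : Set ℂ} (hS : IsRollesDomain S) {ζ η : ℂ}
    (hζη : 3 * (ζ * η) = -1) : ζ ∈ S ∨ η ∈ S := by
  have degree_pos : 0 < (criticalCubic ζ η).natDegree := by
    simp [natDegree_criticalCubic two_ne_zero]
  have eval_eq : (criticalCubic ζ η).eval (-1) = (criticalCubic ζ η).eval 1 := by
    linear_combination -eval_one_sub_eval_neg_one_criticalCubic ζ η - 4 * hζη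
  obtain ⟨z, hzS, hz⟩ := hS _ degree_pos eval_eq
  have hroot : z = ζ ∨ z = η := by
    simpa [derivative_criticalCubic, sub_eq_zero] using hz
  rcases hroot with rfl | rfl
  · exact .inl hzS
  · exact .inr hzS

theorem rolles_domain_contains_or_general {S : Set ℂ} (hS : IsRollesDomain S) {ζ : ℂ}
    (hζ : ζ ≠ 0) : ζ ∈ S ∨ -1 / (3 * ζ) ∈ S :=
  hS.mem_or_mem_s3 (by field_simp)

theorem rolles_domain_contains_or (S : Set ℂ) (hS : IsRollesDomain S)
    (ζ : ℂ) (hζ : 0 < ζ.re) : ζ ∈ S ∨ (-1 / (3 * ζ)) ∈ S :=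
  rolles_domain_contains_or_general hS (Complex.ne_zero_of_re_pos hζ)
end

section
/- For every ε > 0 there exists N such that for every integer n ≥ N there is a complex number ζ with Re(ζ) > 1, |Im(ζ)| < ε, and ∫_{-1}^{1} (w + 1)^n (w - ζ)^5 dw = 0, where the integral is taken along the real segment from -1 to 1. -/
/-!
Put `ζ = 1 + 2 s / (n + 1)`. Up to a nonzero factor the integral of `(w + 1) ^ n (w - ζ) ^ m` is the
expectation of `(s + T) ^ m`, where `T = (n + 1) (1 - w) / 2` and `w` has density proportional to
`(w + 1) ^ n` on `[-1, 1]`. As `n → ∞` the law of `T` tends to the exponential law, whose moments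
are `j!`, so the roots in `s` approach those of
`∑ j, (m choose j) j! s ^ (m - j) = m! ∑_{k ≤ m} s ^ k / k!`, and it remains to find a root of this
truncated exponential with positive real part. For `m = 5` one exists: a polynomial without such
roots is at least as large at `r` as at the mirror image `-conj r` whenever `0 ≤ re r`, and this
fails at `r = 1 / 2 + 3 i`. Differentiating lowers `m` by one, so Gauss–Lucas propagates such roots
to every `m ≥ 5`.
-/

open Filter Finset MeasureTheory Polynomial Topology
open scoped ComplexConjugate Nat

section Roots

variable {K : Type*} [NormedField K] {p : K[X]}

lemma norm_eval_eq_prod_norm_sub_roots (hp : p.Splits) (x : K) :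
    ‖p.eval x‖ = ‖p.leadingCoeff‖ * (p.roots.map fun z ↦ ‖x - z‖).prod := by
  rw [hp.eval_eq_prod_roots, norm_mul]
  exact congrArg _ (Multiset.prod_hom' p.roots normHom (x - ·)).symm

lemma exists_mem_roots_norm_sub_lt_of_norm_eval_lt (hp : p.Splits) (hm : p.Monic) {x : K} {δ : ℝ}
    (hδ : 0 ≤ δ) (hx : ‖p.eval x‖ < δ ^ p.natDegree) : ∃ z ∈ p.roots, ‖x - z‖ < δ := by
  contrapose! hx
  calc δ ^ p.natDegree = (p.roots.map fun _ ↦ δ).prod := by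
        rw [hp.natDegree_eq_card_roots, Multiset.map_const', Multiset.prod_replicate]
    _ ≤ (p.roots.map fun z ↦ ‖x - z‖).prod :=
        Multiset.prod_map_le_prod_map₀ _ _ (fun _ _ ↦ hδ) hx
    _ = ‖p.eval x‖ := by
        rw [norm_eval_eq_prod_norm_sub_roots hp, hm.leadingCoeff, norm_one, one_mul]

end Roots

section HalfPlane

lemma norm_neg_conj_sub_le_norm_sub {r z : ℂ} (hr : 0 ≤ r.re) (hz : z.re ≤ 0) :
    ‖-conj r - z‖ ≤ ‖r - z‖ := by
  rw [← sq_le_sq₀ (norm_nonneg _) (norm_nonneg _), ← Complex.normSq_eq_norm_sq,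
    ← Complex.normSq_eq_norm_sq, Complex.normSq_apply, Complex.normSq_apply]
  simp only [Complex.sub_re, Complex.sub_im, Complex.neg_re, Complex.neg_im, Complex.conj_re,
    Complex.conj_im, neg_neg]
  nlinarith [mul_nonneg hr (neg_nonneg.2 hz)]

lemma exists_mem_roots_re_pos_of_norm_eval_lt {p : ℂ[X]} {r : ℂ} (hr : 0 ≤ r.re)
    (h : ‖p.eval r‖ < ‖p.eval (-conj r)‖) : ∃ z ∈ p.roots, 0 < z.re := by
  contrapose! h
  rw [norm_eval_eq_prod_norm_sub_roots (IsAlgClosed.splits p),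
    norm_eval_eq_prod_norm_sub_roots (IsAlgClosed.splits p)]
  gcongr ?_ * ?_
  exact Multiset.prod_map_le_prod_map₀ _ _ (fun _ _ ↦ norm_nonneg _)
    fun z hz ↦ norm_neg_conj_sub_le_norm_sub hr (h z hz)

lemma exists_mem_roots_re_pos_of_derivative {p : ℂ[X]} {s : ℂ}
    (hs : s ∈ p.derivative.roots) (hre : 0 < s.re) : ∃ z ∈ p.roots, 0 < z.re := by
  have hdeg : 0 < p.degree :=
    natDegree_pos_iff_degree_pos.1 <| Nat.pos_of_ne_zero <|
      derivative_ne_zero.1 (ne_zero_of_mem_roots hs)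
  contrapose! hre
  have hroots : p.rootSet ℂ ⊆ {z | z.re ≤ 0} := fun z hz ↦ hre z <| by
    simpa [mem_rootSet] using hz
  refine convexHull_min hroots (convex_halfSpace_re_le 0) <|
    rootSet_derivative_subset_convexHull_rootSet hdeg ?_
  simpa [mem_rootSet] using hs

end HalfPlane

section Appell

variable {R : Type*} [CommSemiring R]

/-- The Appell polynomial `∑ j, (m choose j) c j X ^ (m - j)` of the sequence `c`. If `c j` is the
`j`-th moment of a random variable `T`, this is the expectation of `(X + T) ^ m`. -/
noncomputable def appellPoly (c : ℕ → R) (m : ℕ) : R[X] :=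
  ∑ j ∈ range (m + 1), C (m.choose j * c j) * X ^ (m - j)

lemma eval_appellPoly (c : ℕ → R) (m : ℕ) (x : R) :
    (appellPoly c m).eval x = ∑ j ∈ range (m + 1), m.choose j * c j * x ^ (m - j) := by
  simp [appellPoly, eval_finsetSum]

lemma derivative_appellPoly_succ (c : ℕ → R) (m : ℕ) :
    derivative (appellPoly c (m + 1)) = C (m + 1 : R) * appellPoly c m := by
  rw [appellPoly, sum_range_succ, derivative_add, derivative_sum, appellPoly, mul_sum]
  simp only [derivative_C_mul_X_pow, tsub_self, Nat.cast_zero, mul_zero, C_0, zero_mul, add_zero]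
  refine sum_congr rfl fun j _ ↦ ?_
  have hchoose : ((m + 1).choose j * (m + 1 - j : ℕ) : R) = (m + 1) * m.choose j := by
    rw [mul_comm (m + 1 : R)]
    exact_mod_cast congrArg (Nat.cast (R := R)) (Nat.choose_mul_succ_eq m j).symm
  rw [← mul_assoc, ← C_mul, mul_right_comm, hchoose, mul_assoc,
    show m + 1 - j - 1 = m - j by omega]

lemma natDegree_appellPoly_le (c : ℕ → R) (m : ℕ) : (appellPoly c m).natDegree ≤ m :=
  natDegree_sum_le_of_forall_le _ _ fun _ _ ↦
    (natDegree_C_mul_X_pow_le _ _).trans (Nat.sub_le _ _)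

lemma coeff_appellPoly_self (c : ℕ → R) (m : ℕ) : (appellPoly c m).coeff m = c 0 := by
  rw [appellPoly, finsetSum_coeff, sum_eq_single_of_mem 0 (by simp)]
  · simp
  · intro j _ hj0
    rw [coeff_C_mul_X_pow, if_neg (by grind)]

lemma monic_appellPoly {c : ℕ → R} (hc : c 0 = 1) (m : ℕ) : (appellPoly c m).Monic :=
  monic_of_natDegree_le_of_coeff_eq_one m (natDegree_appellPoly_le c m)
    ((coeff_appellPoly_self c m).trans hc)

lemma natDegree_appellPoly [Nontrivial R] {c : ℕ → R} (hc : c 0 = 1) (m : ℕ) :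
    (appellPoly c m).natDegree = m :=
  natDegree_eq_of_le_of_coeff_ne_zero (natDegree_appellPoly_le c m) <| by
    rw [coeff_appellPoly_self, hc]
    exact one_ne_zero

end Appell

lemma eventually_exists_mem_roots_appellPoly_norm_sub_lt {ι K : Type*} [NormedField K]
    [IsAlgClosed K] {l : Filter ι} {c : ι → ℕ → K} {c' : ℕ → K} (hc0 : ∀ i, c i 0 = 1)
    (hc : ∀ j, Tendsto (fun i ↦ c i j) l (𝓝 (c' j))) {m : ℕ} {s : K}
    (hs : (appellPoly c' m).eval s = 0) {δ : ℝ} (hδ : 0 < δ) :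
    ∀ᶠ i in l, ∃ z ∈ (appellPoly (c i) m).roots, ‖s - z‖ < δ := by
  have heval : Tendsto (fun i ↦ ‖(appellPoly (c i) m).eval s‖) l (𝓝 0) := by
    rw [← norm_zero (E := K), ← hs]
    simp only [eval_appellPoly]
    exact (tendsto_finsetSum _ fun j _ ↦ ((hc j).const_mul _).mul_const _).norm
  filter_upwards [heval.eventually_lt_const (pow_pos hδ m)] with i hi
  refine exists_mem_roots_norm_sub_lt_of_norm_eval_lt (IsAlgClosed.splits _)
    (monic_appellPoly (hc0 i) m) hδ.le ?_
  rwa [natDegree_appellPoly (hc0 i)]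

section TruncatedExponential

lemma exists_mem_roots_appellPoly_factorial_five_re_pos :
    ∃ s ∈ (appellPoly (fun j ↦ (j ! : ℂ)) 5).roots, 0 < s.re := by
  refine exists_mem_roots_re_pos_of_norm_eval_lt (r := ⟨1 / 2, 3⟩) (by norm_num) ?_
  have heval (x : ℂ) : (appellPoly (fun j ↦ (j ! : ℂ)) 5).eval x =
      x ^ 5 + 5 * x ^ 4 + 20 * x ^ 3 + 60 * x ^ 2 + 120 * x + 120 := by
    simp [eval_appellPoly, sum_range_succ, Nat.choose, Nat.factorial]
    ring
  rw [heval, heval, ← sq_lt_sq₀ (norm_nonneg _) (norm_nonneg _), ← Complex.normSq_eq_norm_sq,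
    ← Complex.normSq_eq_norm_sq, Complex.normSq_apply, Complex.normSq_apply]
  simp only [pow_succ, pow_zero, one_mul, Complex.add_re, Complex.add_im, Complex.mul_re,
    Complex.mul_im, Complex.neg_re, Complex.neg_im, Complex.conj_re, Complex.conj_im,
    Complex.re_ofNat, Complex.im_ofNat]
  norm_num

lemma exists_mem_roots_appellPoly_factorial_re_pos {m : ℕ} (hm : 5 ≤ m) :
    ∃ s ∈ (appellPoly (fun j ↦ (j ! : ℂ)) m).roots, 0 < s.re := by
  induction m, hm using Nat.le_induction with
  | base => exact exists_mem_roots_appellPoly_factorial_five_re_pos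
  | succ m _ ih =>
    obtain ⟨s, hs, hre⟩ := ih
    refine exists_mem_roots_re_pos_of_derivative ?_ hre
    rwa [derivative_appellPoly_succ, roots_C_mul _ (by exact_mod_cast m.succ_ne_zero)]

end TruncatedExponential

section Moments

/-- The `j`-th moment of `(n + 1) (1 - w) / 2` for `w` in `[-1, 1]` with density proportional to
`(w + 1) ^ n`, written through the Beta function
`B (n + 1, j + 1) = ∫ x in 0..1, x ^ n (1 - x) ^ j`. -/
noncomputable def scaledBetaMoment (n j : ℕ) : ℂ :=
  (n + 1) ^ (j + 1) * Complex.betaIntegral (n + 1) (j + 1)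

lemma scaledBetaMoment_eq_factorial_mul_prod (n j : ℕ) :
    scaledBetaMoment n j = j ! * ∏ i ∈ range (j + 1), ((n + 1 : ℕ) : ℂ) / ((n + 1 : ℕ) + i) := by
  have hre : 0 < (n + 1 : ℂ).re := by
    rw [Complex.add_re, Complex.natCast_re, Complex.one_re]
    positivity
  rw [scaledBetaMoment, Complex.betaIntegral_eval_nat_add_one_right hre, prod_div_distrib,
    prod_const, card_range]
  push_cast
  ring

lemma scaledBetaMoment_zero (n : ℕ) : scaledBetaMoment n 0 = 1 := by
  have : (n + 1 : ℂ) ≠ 0 := n.cast_add_one_ne_zero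
  simp [scaledBetaMoment_eq_factorial_mul_prod, this]

lemma tendsto_scaledBetaMoment (j : ℕ) :
    Tendsto (fun n ↦ scaledBetaMoment n j) atTop (𝓝 (j ! : ℂ)) := by
  have hratio (i : ℕ) :
      Tendsto (fun n : ℕ ↦ ((n + 1 : ℕ) : ℂ) / ((n + 1 : ℕ) + i)) atTop (𝓝 1) :=
    (tendsto_natCast_div_add_atTop (i : ℂ)).comp (tendsto_add_atTop_nat 1)
  simpa [scaledBetaMoment_eq_factorial_mul_prod] using
    (tendsto_finsetProd (range (j + 1)) fun i _ ↦ hratio i).const_mul (j ! : ℂ)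

lemma integral_sub_pow_mul_sub_pow {a b : ℝ} (hab : a < b) (n j : ℕ) :
    ∫ w in a..b, ((w : ℂ) - a) ^ n * ((b : ℂ) - w) ^ j =
      (b - a) ^ (n + j + 1) * Complex.betaIntegral (n + 1) (j + 1) := by
  have h := Complex.betaIntegral_scaled (n + 1) (j + 1) (sub_pos.2 hab)
  have hexp : (n + 1 + (j + 1) - 1 : ℂ) = (n + j + 1 : ℕ) := by push_cast; ring
  simp only [hexp, add_sub_cancel_right, Complex.cpow_natCast, Complex.ofReal_sub] at h
  rw [← h, ← sub_self a, ← intervalIntegral.integral_comp_sub_right]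
  simp

lemma integral_mul_add_pow_eq_mul_eval_appellPoly {a b : ℝ} {f g : ℝ → ℂ} {c : ℕ → ℂ} {κ : ℂ}
    (hfg : ∀ j, IntervalIntegrable (fun w ↦ f w * g w ^ j) volume a b)
    (hc : ∀ j, ∫ w in a..b, f w * g w ^ j = κ * c j) (m : ℕ) (z : ℂ) :
    ∫ w in a..b, f w * (z + g w) ^ m = κ * (appellPoly c m).eval z := by
  calc ∫ w in a..b, f w * (z + g w) ^ m
      = ∫ w in a..b, ∑ j ∈ range (m + 1), m.choose j * z ^ (m - j) * (f w * g w ^ j) := by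
        congr! 2 with w
        rw [add_comm z, add_pow, mul_sum]
        exact sum_congr rfl fun j _ ↦ by ring
    _ = ∑ j ∈ range (m + 1), m.choose j * z ^ (m - j) * (κ * c j) := by
        rw [intervalIntegral.integral_finsetSum fun j _ ↦ (hfg j).const_mul _]
        simp only [intervalIntegral.integral_const_mul, hc]
    _ = κ * (appellPoly c m).eval z := by
        rw [eval_appellPoly, mul_sum]
        exact sum_congr rfl fun j _ ↦ by ring

lemma integral_add_one_pow_mul_scaled_pow (n j : ℕ) :
    ∫ w in (-1 : ℝ)..1, ((w : ℂ) + 1) ^ n * ((n + 1) / 2 * (1 - w)) ^ j =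
      2 ^ (n + 1) / (n + 1) * scaledBetaMoment n j := by
  have hn : (n + 1 : ℂ) ≠ 0 := n.cast_add_one_ne_zero
  have hpull (w : ℝ) : ((w : ℂ) + 1) ^ n * ((n + 1) / 2 * (1 - w)) ^ j =
      ((n + 1) / 2) ^ j * (((w : ℂ) - (-1 : ℝ)) ^ n * (((1 : ℝ) : ℂ) - w) ^ j) := by
    push_cast
    rw [mul_pow, mul_left_comm, sub_neg_eq_add]
  simp only [hpull, intervalIntegral.integral_const_mul,
    integral_sub_pow_mul_sub_pow (show (-1 : ℝ) < 1 by norm_num)]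
  rw [show ((1 : ℝ) - (-1 : ℝ) : ℂ) = 2 by norm_num, scaledBetaMoment, div_pow]
  field_simp
  ring

lemma integral_add_one_pow_mul_sub_pow (n m : ℕ) (ζ : ℂ) :
    ∫ w in (-1 : ℝ)..1, ((w : ℂ) + 1) ^ n * ((w : ℂ) - ζ) ^ m =
      (-(2 / (n + 1))) ^ m * (2 ^ (n + 1) / (n + 1) *
        (appellPoly (scaledBetaMoment n) m).eval ((n + 1) / 2 * (ζ - 1))) := by
  have hn : (n + 1 : ℂ) ≠ 0 := n.cast_add_one_ne_zero
  rw [← integral_mul_add_pow_eq_mul_eval_appellPoly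
    (fun j ↦ Continuous.intervalIntegrable (by fun_prop) _ _)
    (integral_add_one_pow_mul_scaled_pow n), ← intervalIntegral.integral_const_mul]
  congr! 2
  rw [mul_left_comm, ← mul_pow]
  congr 2
  field_simp
  ring

end Moments

theorem exists_root_near_one_general {m : ℕ} (hm : 5 ≤ m) {ε : ℝ} (hε : 0 < ε) :
    ∀ᶠ n : ℕ in atTop, ∃ ζ : ℂ, 1 < ζ.re ∧ ‖ζ - 1‖ < ε ∧
      (∫ w : ℝ in (-1 : ℝ)..1, ((w : ℂ) + 1) ^ n * ((w : ℂ) - ζ) ^ m) = 0 := by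
  obtain ⟨s, hs, hre⟩ := exists_mem_roots_appellPoly_factorial_re_pos hm
  have hroots := eventually_exists_mem_roots_appellPoly_norm_sub_lt scaledBetaMoment_zero
    tendsto_scaledBetaMoment (isRoot_of_mem_roots hs) hre
  have hlarge : ∀ᶠ n : ℕ in atTop, 2 * (‖s‖ + s.re) / ε < n :=
    tendsto_natCast_atTop_atTop.eventually_gt_atTop _
  filter_upwards [hroots, hlarge] with n ⟨z, hz, hsz⟩ hn
  have hn0 : (0 : ℝ) < n + 1 := by positivity
  have hzre : 0 < z.re := by
    have := (Complex.re_le_norm (s - z)).trans_lt hsz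
    rw [Complex.sub_re] at this
    linarith
  have hznorm : ‖z‖ < ‖s‖ + s.re := by
    have := norm_le_norm_add_norm_sub' z s
    rw [norm_sub_rev] at this
    linarith
  have hζ : (1 + (2 / (n + 1) : ℝ) * z : ℂ) - 1 = (2 / (n + 1) : ℝ) * z := add_sub_cancel_left _ _
  refine ⟨1 + (2 / (n + 1) : ℝ) * z, ?_, ?_, ?_⟩
  · rw [Complex.add_re, Complex.one_re, Complex.re_ofReal_mul]
    exact lt_add_of_pos_right 1 (by positivity)
  · rw [hζ, norm_mul, Complex.norm_of_nonneg (by positivity), div_mul_eq_mul_div, div_lt_iff₀ hn0]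
    rw [div_lt_iff₀' hε] at hn
    linarith
  · have hscale : (n + 1 : ℂ) / 2 * ((2 / (n + 1) : ℝ) * z) = z := by
      have : (n + 1 : ℂ) ≠ 0 := n.cast_add_one_ne_zero
      push_cast
      field_simp
    rw [integral_add_one_pow_mul_sub_pow, hζ, hscale, isRoot_of_mem_roots hz, mul_zero, mul_zero]

theorem exists_root_near_one :
    ∀ ε : ℝ, 0 < ε → ∃ N : ℕ, ∀ n : ℕ, N ≤ n →
      ∃ ζ : ℂ, 1 < ζ.re ∧ |ζ.im| < ε ∧
        (∫ w : ℝ in (-1 : ℝ)..1, ((w : ℂ) + 1) ^ n * ((w : ℂ) - ζ) ^ 5) = 0 := by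
  intro ε hε
  exact eventually_atTop.1 <| (exists_root_near_one_general le_rfl hε).mono
    fun n ⟨ζ, hre, hζ, hint⟩ ↦
      ⟨ζ, hre, by simpa using (Complex.abs_im_le_norm (ζ - 1)).trans_lt hζ, hint⟩
end

section
/- Let P be a nonconstant complex polynomial with P(-1) = P(1) such that every root of the derivative P' is a real number. Then P' has a root in the open real interval (-1, 1). -/
/-!
If all roots of `P'` are real, then `P' = c q` with `c ∈ ℂ` and `q` a real polynomial. Hence the
curve `t ↦ P(t)` on the real axis always moves parallel to the fixed direction `c`: it is
essentially a real-valued function with derivative `q`, and Rolle's theorem applies.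
-/

open Polynomial Set

theorem exists_eq_C_leadingCoeff_mul_map_of_roots_mem_range {R S : Type*} [CommRing R] [IsDomain R]
    [Ring S] {p : R[X]} (hp : p.Splits) (i : S →+* R) (hroots : ∀ a ∈ p.roots, a ∈ i.range) :
    ∃ q : S[X], p = C p.leadingCoeff * q.map i := by
  set m : R[X] := (p.roots.map fun a ↦ X - C a).prod
  have m_monic : m.Monic := monic_multiset_prod_of_monic _ _ fun a _ ↦ monic_X_sub_C a
  have m_splits : m.Splits := Splits.multisetProd <|
    Multiset.forall_mem_map_iff.2 fun a _ ↦ Splits.X_sub_C a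
  have m_roots : m.roots = p.roots := roots_multiset_prod_X_sub_C _
  obtain ⟨q, hq⟩ := (mem_lifts m).1 <|
    m_splits.mem_lift_of_roots_mem_range m_monic i (m_roots ▸ hroots)
  exact ⟨q, hq ▸ hp.eq_prod_roots⟩

theorem exists_eq_zero_of_hasDerivAt_smul {E : Type*} [NormedAddCommGroup E] [NormedSpace ℝ E]
    {f : ℝ → E} {g : ℝ → ℝ} {v : E} {a b : ℝ} (hab : a < b) (hv : v ≠ 0)
    (hfc : ContinuousOn f (Icc a b)) (hfab : f a = f b)
    (hfg : ∀ x ∈ Ioo a b, HasDerivAt f (g x • v) x) :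
    ∃ x ∈ Ioo a b, g x = 0 := by
  obtain ⟨φ, hφ⟩ : ∃ φ : StrongDual ℝ E, φ v = 1 := SeparatingDual.exists_eq_one hv
  refine exists_hasDerivAt_eq_zero (f := φ ∘ f) hab (φ.continuous.comp_continuousOn hfc)
    (congrArg φ hfab) fun x hx ↦ ?_
  simpa [hφ] using φ.hasFDerivAt.comp_hasDerivAt x (hfg x hx)

theorem exists_eval_eq_zero_of_derivative_eq_C_mul_map_ofReal {P : ℂ[X]} {q : ℝ[X]} {c : ℂ}
    {a b : ℝ} (hab : a < b) (hc : c ≠ 0) (hP : P.eval (a : ℂ) = P.eval (b : ℂ))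
    (hderiv : P.derivative = C c * q.map Complex.ofRealHom) :
    ∃ x ∈ Ioo a b, q.eval x = 0 := by
  have eval_deriv (x : ℝ) : P.derivative.eval (x : ℂ) = q.eval x • c := by
    have eval_map_q : (q.map Complex.ofRealHom).eval (x : ℂ) = q.eval x :=
      eval_map_apply Complex.ofRealHom x
    rw [hderiv, eval_mul, eval_C, eval_map_q, Complex.real_smul, mul_comm]
  have hasDerivAt (x : ℝ) : HasDerivAt (fun t : ℝ ↦ P.eval (t : ℂ)) (q.eval x • c) x :=
    eval_deriv x ▸ (P.hasDerivAt (x : ℂ)).comp_ofReal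
  exact exists_eq_zero_of_hasDerivAt_smul hab hc
    (fun x _ ↦ (hasDerivAt x).continuousAt.continuousWithinAt) hP fun x _ ↦ hasDerivAt x

theorem real_critical_points_rolle_general {P : ℂ[X]} {a b : ℝ} (hab : a < b)
    (heq : P.eval (a : ℂ) = P.eval (b : ℂ))
    (hreal : ∀ z : ℂ, P.derivative.eval z = 0 → z.im = 0) :
    ∃ x ∈ Ioo a b, P.derivative.eval (x : ℂ) = 0 := by
  have deriv_ne_zero : P.derivative ≠ 0 := fun h ↦ by simpa [h] using hreal Complex.I
  have roots_real : ∀ z ∈ P.derivative.roots, z ∈ Complex.ofRealHom.range := fun z hz ↦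
    ⟨z.re, Complex.ext rfl (hreal z (isRoot_of_mem_roots hz)).symm⟩
  obtain ⟨q, hq⟩ := exists_eq_C_leadingCoeff_mul_map_of_roots_mem_range
    (IsAlgClosed.splits P.derivative) Complex.ofRealHom roots_real
  obtain ⟨x, hx, hqx⟩ := exists_eval_eq_zero_of_derivative_eq_C_mul_map_ofReal hab
    (leadingCoeff_ne_zero.2 deriv_ne_zero) heq hq
  have map_root : (q.map Complex.ofRealHom).eval (x : ℂ) = 0 :=
    IsRoot.map (f := Complex.ofRealHom) hqx
  exact ⟨x, hx, by rw [hq, eval_mul, map_root, mul_zero]⟩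

theorem real_critical_points_rolle (P : Polynomial ℂ)
    (hdeg : 0 < P.natDegree) (heq : P.eval (-1) = P.eval 1)
    (hreal : ∀ z : ℂ, P.derivative.eval z = 0 → z.im = 0) :
    ∃ x : ℝ, -1 < x ∧ x < 1 ∧ P.derivative.eval (x : ℂ) = 0 := by
  simpa [and_assoc] using
    real_critical_points_rolle_general (a := -1) (b := 1) (by norm_num) (by simpa using heq) hreal
end
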